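/- arXiv:2203.05529 — 2 statements merged into one kernel-verified Lean document; each statement's English description precedes it below -/
import Mathlib

section
/- Let f(x)=x^6-2x^5-x^4+4x^3-x^2-2x+1 and g(x)=x^6+x^5+2x^4+x^3+2x^2+x+1, let A and B be their companion matrices viewed in GL(6,ℚ), and let X be the rational matrix with rows [0,0,0,0,0,-3], [-3,-6,0,0,0,-3], [-3,-6,0,0,6,3], [3,12,-27/2,0,-3,-3], [-3,-9,-27/2,27/2,6,-3], [-3,0,0,0,0,0]. Set a = X⁻¹AX, b = X⁻¹BX, c = a⁻¹b, q₁ = b a⁻¹, and define w₁=[a,b⁻¹], w₂=[a,b²], w₃=w₂ q₁⁻⁸, w₄=q₁ c, w₅=[w₁,w₃], w₆=[w₄,w₃], w₇=[w₆,w₅], where [x,y]=xyx⁻¹y⁻¹. Then q₂ := w₃^2916 · w₇⁻¹ equals the 6×6 matrix I + 52488·E₁₅ − 26244·E₂₆, i.e., the identity matrix with additional entries 52488 in position (1,5) and −26244 in position (2,6). -/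
/-!
The elements `a` and `b` differ by a transvection: `q₁ = b a⁻¹ = I + 3 E₁₆` and
`c = a⁻¹ b = I - 3 E₆₁`. Since `w₁ = (a b⁻¹)(a⁻¹ b) = q₁⁻¹ c`, everything from `c` on, once
`w₂ = [a, b²]` is known, lives in the group of matrices `jac` acting on the coordinates
`1, 2, 5, 6`: a 2×2 block `g` on the coordinates `1, 6`, extended by a Heisenberg group with a
row vector `v` in row 2, a column vector `u` in column 5 and a central coordinate at `(2, 5)`.
In this group

* `(g, u, v, z)(g', u', v', z') = (g g', u + g u', v g' + v', z + z' + v u')` (`jac_mul`),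
* `w₃ = (1, u, v, -6)` with `v u = 0`, so that its powers are `(1, n u, n v, -6 n)` (`w₃_pow`),
* `w₅ = [w₁, w₃]` and `w₆ = [w₄, w₃]` lie in the Heisenberg group, so their commutator `w₇` is
  central, namely `I - 17496 E₂₅`.

As `6 · 2916 = 17496`, the factor `w₇⁻¹` cancels exactly the `(2, 5)` entry of `w₃ ^ 2916`.
-/

open Matrix

/-- Group commutator [x,y] = x y x⁻¹ y⁻¹ (here for 6×6 rational matrices,
with ⁻¹ the matrix inverse). -/
noncomputable def com (x y : Matrix (Fin 6) (Fin 6) ℚ) : Matrix (Fin 6) (Fin 6) ℚ :=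
  x * y * x⁻¹ * y⁻¹

/-- Companion matrix of f(x)=x⁶-2x⁵-x⁴+4x³-x²-2x+1, over ℚ. -/
noncomputable def matA : Matrix (Fin 6) (Fin 6) ℚ :=
  !![0,0,0,0,0,-1; 1,0,0,0,0,2; 0,1,0,0,0,1; 0,0,1,0,0,-4; 0,0,0,1,0,1; 0,0,0,0,1,2]

/-- Companion matrix of g(x)=x⁶+x⁵+2x⁴+x³+2x²+x+1, over ℚ. -/
noncomputable def matB : Matrix (Fin 6) (Fin 6) ℚ :=
  !![0,0,0,0,0,-1; 1,0,0,0,0,-1; 0,1,0,0,0,-2; 0,0,1,0,0,-1; 0,0,0,1,0,-2; 0,0,0,0,1,-1]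

/-- The change of basis matrix X. -/
noncomputable def matX : Matrix (Fin 6) (Fin 6) ℚ :=
  !![0,0,0,0,0,-3; -3,-6,0,0,0,-3; -3,-6,0,0,6,3; 3,12,-27/2,0,-3,-3;
     -3,-9,-27/2,27/2,6,-3; -3,0,0,0,0,0]

noncomputable def a : Matrix (Fin 6) (Fin 6) ℚ := matX⁻¹ * matA * matX
noncomputable def b : Matrix (Fin 6) (Fin 6) ℚ := matX⁻¹ * matB * matX
noncomputable def c : Matrix (Fin 6) (Fin 6) ℚ := a⁻¹ * b
noncomputable def q₁ : Matrix (Fin 6) (Fin 6) ℚ := b * a⁻¹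
noncomputable def w₁ : Matrix (Fin 6) (Fin 6) ℚ := com a b⁻¹
noncomputable def w₂ : Matrix (Fin 6) (Fin 6) ℚ := com a (b ^ 2)
noncomputable def w₃ : Matrix (Fin 6) (Fin 6) ℚ := w₂ * q₁ ^ (-8 : ℤ)
noncomputable def w₄ : Matrix (Fin 6) (Fin 6) ℚ := q₁ * c
noncomputable def w₅ : Matrix (Fin 6) (Fin 6) ℚ := com w₁ w₃
noncomputable def w₆ : Matrix (Fin 6) (Fin 6) ℚ := com w₄ w₃
noncomputable def w₇ : Matrix (Fin 6) (Fin 6) ℚ := com w₆ w₅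

/-- The matrix with 2×2 block `(p, q; r, s)` on the coordinates `1, 6`, column vector `(x, u)` in
column 5 (rows 1 and 6), row vector `(y, t)` in row 2 (columns 1 and 6), entry `z` at `(2, 5)`,
and the identity elsewhere. -/
def jac (p q r s x u y t z : ℚ) : Matrix (Fin 6) (Fin 6) ℚ :=
  !![p, 0, 0, 0, x, q; y, 1, 0, 0, z, t; 0, 0, 1, 0, 0, 0;
     0, 0, 0, 1, 0, 0; 0, 0, 0, 0, 1, 0; r, 0, 0, 0, u, s]

lemma jac_mul (p q r s x u y t z p' q' r' s' x' u' y' t' z' : ℚ) :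
    jac p q r s x u y t z * jac p' q' r' s' x' u' y' t' z' =
      jac (p * p' + q * r') (p * q' + q * s') (r * p' + s * r') (r * q' + s * s')
        (x + (p * x' + q * u')) (u + (r * x' + s * u'))
        (y * p' + t * r' + y') (y * q' + t * s' + t') (z + z' + (y * x' + t * u')) := by
  ext i j
  fin_cases i <;> fin_cases j <;> simp [jac, Matrix.mul_apply, Fin.sum_univ_succ] <;> ring

lemma jac_one : jac 1 0 0 1 0 0 0 0 0 = 1 := by
  ext i j
  fin_cases i <;> fin_cases j <;> simp [jac]

/-- The inverse is stated for blocks of determinant one, the only ones that occur. -/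
lemma jac_inv (p q r s x u y t z : ℚ) (h : p * s - q * r = 1) :
    (jac p q r s x u y t z)⁻¹ =
      jac s (-q) (-r) p (q * u - s * x) (r * x - p * u) (t * r - y * s) (y * q - t * p)
        (y * (s * x - q * u) + t * (p * u - r * x) - z) := by
  refine Matrix.inv_eq_right_inv ?_
  rw [jac_mul, ← jac_one]
  congr 1 <;> grind

lemma matX_inv : matX⁻¹ =
    !![0, 0, 0, 0, 0, -1/3; 1/6, -1/6, 0, 0, 0, 1/6; 4/27, -1/9, -1/27, -2/27, 0, 2/27;
       1/27, -4/27, -1/9, -2/27, 2/27, 1/9; 1/3, -1/6, 1/6, 0, 0, 0; -1/3, 0, 0, 0, 0, 0] := by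
  refine Matrix.inv_eq_right_inv ?_
  unfold matX
  decide +kernel

lemma a_eq : a =
    !![3, 3, 9/2, -9/2, -2, 1; 0, -3/2, -9/4, 9/4, 1, 0; 0, 0, -1, 1, 0, 0;
       0, 1, -5/2, 3/2, 0, 0; 1, -1, 0, 0, 0, 0; -1, 0, 0, 0, 0, 0] := by
  rw [a, matX_inv, matA, matX]
  decide +kernel

lemma b_eq : b =
    !![0, 3, 9/2, -9/2, -2, 1; 0, -3/2, -9/4, 9/4, 1, 0; 0, 0, -1, 1, 0, 0;
       0, 1, -5/2, 3/2, 0, 0; 1, -1, 0, 0, 0, 0; -1, 0, 0, 0, 0, 0] := by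
  rw [b, matX_inv, matB, matX]
  decide +kernel

lemma a_inv : a⁻¹ =
    !![0, 0, 0, 0, 0, -1; 0, 0, 0, 0, -1, -1; 0, 0, 3/2, -1, -1, -1;
       0, 0, 5/2, -1, -1, -1; 0, 1, -9/4, 0, -3/2, -3/2; 1, 2, 0, 0, 0, 3] := by
  refine Matrix.inv_eq_right_inv ?_
  rw [a_eq]
  decide +kernel

lemma b_inv : b⁻¹ =
    !![0, 0, 0, 0, 0, -1; 0, 0, 0, 0, -1, -1; 0, 0, 3/2, -1, -1, -1;
       0, 0, 5/2, -1, -1, -1; 0, 1, -9/4, 0, -3/2, -3/2; 1, 2, 0, 0, 0, 0] := by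
  refine Matrix.inv_eq_right_inv ?_
  rw [b_eq]
  decide +kernel

lemma b_inv_inv : b⁻¹⁻¹ = b := by
  refine Matrix.inv_eq_right_inv ?_
  rw [b_inv, b_eq]
  decide +kernel

lemma c_eq : c = jac 1 0 (-3) 1 0 0 0 0 0 := by
  rw [c, a_inv, b_eq, jac]
  decide +kernel

lemma q₁_eq : q₁ = jac 1 3 0 1 0 0 0 0 0 := by
  rw [q₁, a_inv, b_eq, jac]
  decide +kernel

lemma w₁_eq : w₁ = jac 10 (-3) (-3) 1 0 0 0 0 0 := by
  rw [w₁, com, b_inv_inv, a_inv, b_inv, a_eq, b_eq, jac]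
  decide +kernel

lemma w₂_eq : w₂ = jac 1 24 0 1 18 0 0 (-9) (-6) := by
  rw [w₂, com, ← Matrix.inv_pow', a_inv, b_inv, a_eq, b_eq, jac]
  decide +kernel

lemma w₃_eq : w₃ = jac 1 0 0 1 18 0 0 (-9) (-6) := by
  have h : q₁ ^ (-8 : ℤ) = (q₁ ^ 8)⁻¹ := Matrix.zpow_neg_natCast q₁ 8
  have h8 : q₁ ^ 8 = jac 1 24 0 1 0 0 0 0 0 := by
    rw [q₁_eq]
    simp only [pow_succ, pow_zero, one_mul, jac_mul]
    norm_num
  rw [w₃, h, h8, w₂_eq, jac_inv _ _ _ _ _ _ _ _ _ (by norm_num), jac_mul]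
  norm_num

lemma w₄_eq : w₄ = jac (-8) 3 (-3) 1 0 0 0 0 0 := by
  rw [w₄, q₁_eq, c_eq, jac_mul]
  norm_num

lemma w₃_pow (n : ℕ) : w₃ ^ n = jac 1 0 0 1 (18 * n) 0 0 (-9 * n) (-6 * n) := by
  induction n with
  | zero => simp [jac_one]
  | succ n ih =>
    rw [pow_succ, ih, w₃_eq, jac_mul]
    congr 1 <;> push_cast <;> ring

lemma w₅_eq : w₅ = jac 1 0 0 1 162 (-54) (-27) (-81) 486 := by
  rw [w₅, com, w₁_eq, w₃_eq, jac_inv _ _ _ _ _ _ _ _ _ (by norm_num),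
    jac_inv _ _ _ _ _ _ _ _ _ (by norm_num), jac_mul, jac_mul, jac_mul]
  norm_num

lemma w₆_eq : w₆ = jac 1 0 0 1 (-162) (-54) (-27) 81 486 := by
  rw [w₆, com, w₄_eq, w₃_eq, jac_inv _ _ _ _ _ _ _ _ _ (by norm_num),
    jac_inv _ _ _ _ _ _ _ _ _ (by norm_num), jac_mul, jac_mul, jac_mul]
  norm_num

lemma w₇_eq : w₇ = jac 1 0 0 1 0 0 0 0 (-17496) := by
  rw [w₇, com, w₆_eq, w₅_eq, jac_inv _ _ _ _ _ _ _ _ _ (by norm_num),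
    jac_inv _ _ _ _ _ _ _ _ _ (by norm_num), jac_mul, jac_mul, jac_mul]
  norm_num

/-- q₂ = w₃^2916 · w₇⁻¹ is the identity matrix with additional entries
52488 in position (1,5) and −26244 in position (2,6). -/
theorem stmt_11 :
    w₃ ^ 2916 * w₇⁻¹ =
      !![1,0,0,0,52488,0; 0,1,0,0,0,-26244; 0,0,1,0,0,0;
         0,0,0,1,0,0; 0,0,0,0,1,0; 0,0,0,0,0,1] := by
  rw [w₃_pow, w₇_eq, jac_inv _ _ _ _ _ _ _ _ _ (by norm_num), jac_mul]
  norm_num [jac]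
end

section
/- Let f(x)=x^6-2x^5-x^4+4x^3-x^2-2x+1 and g(x)=x^6+x^5+2x^4+x^3+2x^2+x+1, let A and B be their companion matrices viewed as matrices over ℚ, let e₆ = (0,0,0,0,0,1)ᵗ, and let v = (A⁻¹B − I)e₆, where I is the 6×6 identity matrix. Then v = (−3,−3,3,−3,−3,0)ᵗ and the six vectors v, Bv, B²v, B³v, B⁴v, B⁵v are linearly independent over ℚ (hence form a basis of ℚ⁶). -/
/-!
Since `A` is invertible, `v = A⁻¹ (B - A) e₆`, so the value of `v` is checked by multiplying by `A`:
it amounts to `A w = B e₆ - A e₆`, a relation between the last columns of `A` and `B`.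
The vectors `Bᵏ v` are then found by iterating `B`. Taking them as the rows of a square matrix,
linear independence is invertibility of that matrix, witnessed by an explicit inverse.
-/

open Matrix

/-- The standard basis vector e₆. -/
def e₆ : Fin 6 → ℚ := ![0, 0, 0, 0, 0, 1]

/-- v = (A⁻¹B − I)e₆. -/
noncomputable def v : Fin 6 → ℚ := (matA⁻¹ * matB - 1).mulVec e₆

lemma det_matA_isUnit : IsUnit matA.det := by
  -- The inverse of a companion matrix is again explicit: it undoes the shift.
  have h : matA * !![2,1,0,0,0,0; 1,0,1,0,0,0; -4,0,0,1,0,0; 1,0,0,0,1,0; 2,0,0,0,0,1;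
      -1,0,0,0,0,0] = 1 := by
    unfold matA
    decide +kernel
  exact (Matrix.isUnit_iff_isUnit_det _).1 (IsUnit.of_mul_eq_one _ h)

lemma v_eq : v = ![-3, -3, 3, -3, -3, 0] := by
  have key : matB *ᵥ e₆ = matA *ᵥ (![-3, -3, 3, -3, -3, 0] + e₆) := by
    unfold matA matB e₆
    decide +kernel
  rw [v, Matrix.sub_mulVec, ← Matrix.mulVec_mulVec, key, Matrix.mulVec_mulVec,
    Matrix.nonsing_inv_mul _ det_matA_isUnit, Matrix.one_mulVec, Matrix.one_mulVec,
    add_sub_cancel_right]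

/-- Multiplication by `x` in `ℚ[x]/(g)`, in the basis of powers of `x`. -/
lemma matB_mulVec (a b c d e f : ℚ) :
    matB *ᵥ ![a, b, c, d, e, f] = ![-f, a - f, b - 2 * f, c - f, d - 2 * f, e - f] := by
  ext i
  fin_cases i <;> simp [matB, Matrix.mulVec, dotProduct, Fin.sum_univ_six] <;> ring

/-- The matrix whose rows are `v, Bv, …, B⁵v`. -/
def krylov : Matrix (Fin 6) (Fin 6) ℚ :=
  !![-3, -3, 3, -3, -3, 0; 0, -3, -3, 3, -3, -3; 3, 3, 3, 0, 9, 0; 0, 3, 3, 3, 0, 9;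
    -9, -9, -15, -6, -15, -9; 9, 0, 9, -6, 12, -6]

lemma krylov_rows :
    ![v, matB *ᵥ v, (matB ^ 2) *ᵥ v, (matB ^ 3) *ᵥ v, (matB ^ 4) *ᵥ v, (matB ^ 5) *ᵥ v] =
      krylov.row := by
  have h1 : matB *ᵥ v = ![0, -3, -3, 3, -3, -3] := by
    rw [v_eq, matB_mulVec]; norm_num
  have h2 : (matB ^ 2) *ᵥ v = ![3, 3, 3, 0, 9, 0] := by
    rw [sq, ← Matrix.mulVec_mulVec, h1, matB_mulVec]; norm_num
  have h3 : (matB ^ 3) *ᵥ v = ![0, 3, 3, 3, 0, 9] := by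
    rw [pow_succ', ← Matrix.mulVec_mulVec, h2, matB_mulVec]; norm_num
  have h4 : (matB ^ 4) *ᵥ v = ![-9, -9, -15, -6, -15, -9] := by
    rw [pow_succ', ← Matrix.mulVec_mulVec, h3, matB_mulVec]; norm_num
  have h5 : (matB ^ 5) *ᵥ v = ![9, 0, 9, -6, 12, -6] := by
    rw [pow_succ', ← Matrix.mulVec_mulVec, h4, matB_mulVec]; norm_num
  rw [h1, h2, h3, h4, h5, v_eq]
  rfl

lemma krylov_isUnit : IsUnit krylov := by
  have h : krylov * !![-5/27, 1/27, -5/27, 4/27, 1/27, 4/27;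
      -4/27, -1/3, -7/27, -1/3, -4/27, -1/9;
      1/9, -1/27, -1/9, -4/27, -1/9, -1/27;
      1/27, 4/27, 1/27, -2/27, -2/27, -2/27;
      2/27, 1/9, 8/27, 1/9, 2/27, 0;
      0, 2/27, 1/9, 8/27, 1/9, 2/27] = 1 := by
    unfold krylov
    decide +kernel
  exact IsUnit.of_mul_eq_one _ h

/-- v = (−3,−3,3,−3,−3,0)ᵗ and v, Bv, B²v, B³v, B⁴v, B⁵v are linearly
independent over ℚ. -/
theorem stmt_19 :
    v = ![-3, -3, 3, -3, -3, 0] ∧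
      LinearIndependent ℚ
        ![v, matB.mulVec v, (matB ^ 2).mulVec v, (matB ^ 3).mulVec v,
          (matB ^ 4).mulVec v, (matB ^ 5).mulVec v] := by
  refine ⟨v_eq, ?_⟩
  rw [krylov_rows]
  exact Matrix.linearIndependent_rows_iff_isUnit.2 krylov_isUnit
end
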